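/- arXiv:2004.06225 — 4 statements merged into one kernel-verified Lean document; each statement's English description precedes it below -/
import Mathlib

section
/- Let C be an abelian monoidal category with unit 𝟙 whose tensor product is additive in each variable. Let P be an ℕ-indexed chain complex over C with a degree 0 chain map μ_P : P ⟶ 𝟙 (𝟙 viewed as a complex concentrated in degree 0), and let Δ_P : P ⟶ P⊗P be a degree 0 chain map with (μ_P⊗μ_P)Δ_P = μ_P (via 𝟙⊗𝟙 ≅ 𝟙). Set α_P = (μ_P⊗1_P)Δ_P and β_P = (1_P⊗μ_P)Δ_P, regarded via the unitors as degree 0 chain maps P ⟶ P, and define Δ'_P = ((α_P − β_P)⊗1_P)Δ_P + Δ_P∘β_P. Then Δ'_P : P ⟶ P⊗P is a degree 0 chain map satisfying (μ_P⊗μ_P)Δ'_P = μ_P and (μ_P⊗1_P)Δ'_P = (1_P⊗μ_P)Δ'_P. -/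
/-!
STATEMENT 6: In an abelian monoidal category with tensor product additive in each
variable, a diagonal `Δ_P : P ⟶ P ⊗ P` lifting `μ_P` can be corrected to
`Δ'_P = ((α_P - β_P) ⊗ 1_P)Δ_P + Δ_P β_P`, which is again a chain map lifting `μ_P`
and whose two counit contractions agree (paper: Remark 4.5).
-/

open CategoryTheory CategoryTheory.Limits CategoryTheory.MonoidalCategory

universe v u

attribute [local instance] CategoryTheory.Abelian.hasFiniteBiproducts

variable {C : Type u} [Category.{v} C] [Abelian C] [MonoidalCategory C] [MonoidalPreadditive C]

/-- The degree `i` piece of the tensor product complex `E ⊗ F`: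
`(E ⊗ F)_i = ⨁_{j+k=i} E_j ⊗ F_k`. -/
noncomputable abbrev tOb (E F : ℕ → C) (i : ℕ) : C :=
  ⨁ (fun j : Fin (i + 1) => E j.1 ⊗ F (i - j.1))

/-- The differential of the tensor product complex `P ⊗ P`; on the summand
`P_j ⊗ P_k` it is `d ⊗ 1 + (-1)^j (1 ⊗ d)`. -/
noncomputable def tD (P : ℕ → C) (dP : ∀ i, P (i + 1) ⟶ P i) (i : ℕ) :
    tOb P P (i + 1) ⟶ tOb P P i :=
  biproduct.matrix fun (j : Fin (i + 2)) (k : Fin (i + 1)) =>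
    (if h : j.1 = k.1 + 1 then
        eqToHom (show P j.1 ⊗ P (i + 1 - j.1) = P (k.1 + 1) ⊗ P (i - k.1) by
          rw [h, show i + 1 - (k.1 + 1) = i - k.1 by omega]) ≫ (dP k.1 ▷ P (i - k.1))
      else 0) +
    (if h : j.1 = k.1 then
        ((-1 : ℤ) ^ k.1) •
          (eqToHom (show P j.1 ⊗ P (i + 1 - j.1) = P k.1 ⊗ P ((i - k.1) + 1) by
            rw [h, show i + 1 - k.1 = (i - k.1) + 1 by have := k.2; omega]) ≫
            (P k.1 ◁ dP (i - k.1)))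
      else 0)

/-- Contraction of the first tensor factor against a degree `m` morphism `π : E ⟶ 𝟙`
(with single component `π : E_m ⟶ 𝟙`), composed with the left unitor:
this is `(π ⊗ 1_F) : (E ⊗ F)_i ⟶ F_j` for `i = j + m` (no Koszul sign since
`1_F` has degree `0`). -/
noncomputable def cFst (E F : ℕ → C) {m : ℕ} (π : E m ⟶ 𝟙_ C) (i j : ℕ) (h : i = j + m) :
    tOb E F i ⟶ F j :=
  biproduct.π (fun a : Fin (i + 1) => E a.1 ⊗ F (i - a.1)) ⟨m, by omega⟩ ≫
    (π ▷ F (i - m)) ≫ (λ_ (F (i - m))).hom ≫ eqToHom (congrArg F (show i - m = j by omega))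

/-- Contraction of the second tensor factor against a degree `m` morphism `π : F ⟶ 𝟙`
(with single component `π : F_m ⟶ 𝟙`), composed with the right unitor:
this is `(1_E ⊗ π) : (E ⊗ F)_i ⟶ E j` for `i = j + m`, including the Koszul sign
`(-1)^{m·j}` coming from moving `π` past `E_j`. -/
noncomputable def cSnd (E F : ℕ → C) {m : ℕ} (π : F m ⟶ 𝟙_ C) (i j : ℕ) (h : i = j + m) :
    tOb E F i ⟶ E j :=
  ((-1 : ℤ) ^ (m * j)) •
    (biproduct.π (fun a : Fin (i + 1) => E a.1 ⊗ F (i - a.1)) ⟨j, by omega⟩ ≫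
      (E j ◁ (eqToHom (congrArg F (show i - j = m by omega)) ≫ π)) ≫ (ρ_ (E j)).hom)

/-- The augmentation `(μ ⊗ μ) : (P ⊗ P)_0 = P_0 ⊗ P_0 ⟶ 𝟙 ⊗ 𝟙 ≅ 𝟙`. -/
noncomputable def tAug (P : ℕ → C) (μ : P 0 ⟶ 𝟙_ C) : tOb P P 0 ⟶ 𝟙_ C :=
  biproduct.π (fun a : Fin 1 => P a.1 ⊗ P (0 - a.1)) ⟨0, Nat.one_pos⟩ ≫
    (μ ⊗ₘ μ) ≫ (λ_ (𝟙_ C)).hom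

/-- A degree `n` morphism of (ℕ-indexed, bounded below) complexes: a family of
components `E_i ⟶ F_j` for `i = j + n`. -/
abbrev DH (E F : ℕ → C) (n : ℤ) :=
  ∀ i j : ℕ, (i : ℤ) = (j : ℤ) + n → (E i ⟶ F j)

/-- Pointwise subtraction of degree `n` morphisms. -/
instance {E F : ℕ → C} {n : ℤ} : Sub (DH E F n) :=
  ⟨fun f g i j h => f i j h - g i j h⟩

/-- `∂(f) = d_F ∘ f - (-1)^n f ∘ d_E` for a degree `n` morphism `f`. -/
noncomputable def pdel {E F : ℕ → C} (dE : ∀ i, E (i + 1) ⟶ E i) (dF : ∀ i, F (i + 1) ⟶ F i)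
    {n m : ℤ} (hm : m = n + 1) (f : DH E F n) : DH E F m :=
  fun i j h =>
    f i (j + 1) (by push_cast; omega) ≫ dF j -
      (n.negOnePow : ℤ) •
        (match i, h with
          | 0, _ => 0
          | (k + 1), h => dE k ≫ f k j (by push_cast at h; omega))

/-- The degree `n` morphism `(f ⊗ 1_P - 1_P ⊗ f) ∘ Δ : P ⟶ P` associated to a degree `n`
cochain `f : P_n ⟶ 𝟙` and a diagonal `Δ : P ⟶ P ⊗ P`. -/
noncomputable def liftRHS (P : ℕ → C) (Δ : ∀ i, P i ⟶ tOb P P i) (n : ℕ) (f : P n ⟶ 𝟙_ C) :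
    DH P P (n : ℤ) :=
  fun i j h => Δ i ≫ cFst P P f i j (by omega) - Δ i ≫ cSnd P P f i j (by omega)

/-- The degree `0` morphism `(μ ⊗ 1_P - 1_P ⊗ μ) ∘ Δ : P ⟶ P`. -/
noncomputable def counitRHS (P : ℕ → C) (μ : P 0 ⟶ 𝟙_ C) (Δ : ∀ i, P i ⟶ tOb P P i) :
    DH P P (0 : ℤ) :=
  fun i j h => Δ i ≫ cFst P P μ i j (by omega) - Δ i ≫ cSnd P P μ i j (by omega)

/-- Two degree `k` morphisms `u, v : P ⟶ 𝟙` (identified with their single possibly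
nonzero components `P_k ⟶ 𝟙`) are homotopic iff `u - v = ∂(s)` for a degree `k-1`
morphism `s : P ⟶ 𝟙`; unravelled, `u - v = (-1)^k (s ∘ d_{k-1})`. -/
def homotopicToUnit (P : ℕ → C) (dP : ∀ i, P (i + 1) ⟶ P i) (k : ℕ)
    (u v : P k ⟶ 𝟙_ C) : Prop :=
  if hk : k = 0 then u = v
  else ∃ s : P (k - 1) ⟶ 𝟙_ C,
    u - v = ((-1 : ℤ) ^ k) •
      (eqToHom (congrArg P (show k = (k - 1) + 1 by omega)) ≫ dP (k - 1) ≫ s)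

/-- `ψf` is a homotopy lifting of `(f, Δ)`:  `∂(ψ_f) = (f ⊗ 1_P - 1_P ⊗ f)Δ` and
`μ ∘ ψ_f ∼ (-1)^{n+1} f ∘ ψ` for some degree `-1` morphism `ψ : P ⟶ P` with
`∂(ψ) = (μ ⊗ 1_P - 1_P ⊗ μ)Δ`. -/
def IsHomotopyLifting (P : ℕ → C) (dP : ∀ i, P (i + 1) ⟶ P i) (μ : P 0 ⟶ 𝟙_ C)
    (Δ : ∀ i, P i ⟶ tOb P P i) (n : ℕ) (hn : 1 ≤ n) (f : P n ⟶ 𝟙_ C)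
    (ψf : DH P P ((n : ℤ) - 1)) : Prop :=
  pdel dP dP (show (n : ℤ) = ((n : ℤ) - 1) + 1 by ring) ψf = liftRHS P Δ n f ∧
  ∃ ψ : DH P P (-1 : ℤ),
    pdel dP dP (show (0 : ℤ) = (-1 : ℤ) + 1 by ring) ψ = counitRHS P μ Δ ∧
    homotopicToUnit P dP (n - 1)
      (ψf (n - 1) 0 (by omega) ≫ μ)
      (((-1 : ℤ) ^ (n + 1)) • (ψ (n - 1) n (by omega) ≫ f))

/-- `Δ' = ((α_P - β_P) ⊗ 1_P) ∘ Δ + Δ ∘ β_P`, where `α_P = (μ ⊗ 1_P)Δ` and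
`β_P = (1_P ⊗ μ)Δ` (regarded via the unitors as degree `0` chain maps `P ⟶ P`). -/
noncomputable def DeltaPrime (P : ℕ → C) (μ : P 0 ⟶ 𝟙_ C) (Δ : ∀ i, P i ⟶ tOb P P i) (i : ℕ) :
    P i ⟶ tOb P P i :=
  Δ i ≫ biproduct.map (fun a : Fin (i + 1) =>
      ((Δ a.1 ≫ cFst P P μ a.1 a.1 rfl) - (Δ a.1 ≫ cSnd P P μ a.1 a.1 rfl)) ▷ P (i - a.1)) +
  (Δ i ≫ cSnd P P μ i i rfl) ≫ Δ i

/-!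
Both counit contractions of `Δ'` equal the composite `αβ`. Since `μα = μ = μβ`, the cochain
`μ(α - β)` vanishes, so `(μ ⊗ 1)Δ' = (μ(α - β) ⊗ 1)Δ + αβ = αβ`, while
`(1 ⊗ μ)Δ' = (α - β)β + ββ = αβ`. Composing once more with `μ` gives `(μ ⊗ μ)Δ' = μαβ = μ`.
-/

section TensorComplex

omit [MonoidalPreadditive C]

variable {E E' F : ℕ → C}

/-- The projection of `(E ⊗ F)_i` onto its summand `E_j ⊗ F_k`, for `j + k = i`. Keeping `j` and
`k` as independent indices absorbs the transport along `i - j = k` needed with `tOb`. -/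
noncomputable def tπ (E F : ℕ → C) (j k i : ℕ) (h : j + k = i) : tOb E F i ⟶ E j ⊗ F k :=
  biproduct.π (fun a : Fin (i + 1) => E a.1 ⊗ F (i - a.1)) ⟨j, by omega⟩ ≫
    E j ◁ eqToHom (congrArg F (show i - j = k by omega))

lemma tOb_hom_ext {X : C} {i : ℕ} {f g : X ⟶ tOb E F i}
    (hfg : ∀ j k h, f ≫ tπ E F j k i h = g ≫ tπ E F j k i h) : f = g := by
  refine biproduct.hom_ext _ _ fun a => ?_
  simpa [tπ] using hfg a.1 (i - a.1) (by omega)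

lemma cFst_eq {m : ℕ} (π : E m ⟶ 𝟙_ C) (i j : ℕ) (h : i = j + m) :
    cFst E F π i j h = tπ E F m j i (by omega) ≫ π ▷ F j ≫ (λ_ (F j)).hom := by
  obtain rfl : j = i - m := by omega
  simp [cFst, tπ]

lemma cSnd_eq {m : ℕ} (π : F m ⟶ 𝟙_ C) (i j : ℕ) (h : i = j + m) :
    cSnd E F π i j h =
      ((-1 : ℤ) ^ (m * j)) • (tπ E F j m i h.symm ≫ E j ◁ π ≫ (ρ_ (E j)).hom) := by
  simp [cSnd, tπ]

/-- The morphism `f ⊗ 1_F : E ⊗ F ⟶ E' ⊗ F` for a degree `0` morphism `f : E ⟶ E'`. -/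
noncomputable def tWhiskerRight (f : ∀ i, E i ⟶ E' i) (F : ℕ → C) (i : ℕ) :
    tOb E F i ⟶ tOb E' F i :=
  biproduct.map fun a : Fin (i + 1) => f a.1 ▷ F (i - a.1)

lemma tWhiskerRight_comp_tπ (f : ∀ i, E i ⟶ E' i) (j k i : ℕ) (h : j + k = i) :
    tWhiskerRight f F i ≫ tπ E' F j k i h = tπ E F j k i h ≫ f j ▷ F k := by
  simp only [tWhiskerRight, tπ, biproduct.map_π_assoc, Category.assoc, whisker_exchange]

lemma tWhiskerRight_comp_cFst (f : ∀ i, E i ⟶ E' i) {m : ℕ} (π : E' m ⟶ 𝟙_ C) (i j : ℕ)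
    (h : i = j + m) :
    tWhiskerRight f F i ≫ cFst E' F π i j h = cFst E F (f m ≫ π) i j h := by
  simp only [cFst_eq, reassoc_of% tWhiskerRight_comp_tπ f, comp_whiskerRight, Category.assoc]

lemma tWhiskerRight_comp_cSnd (f : ∀ i, E i ⟶ E' i) {m : ℕ} (π : F m ⟶ 𝟙_ C) (i j : ℕ)
    (h : i = j + m) :
    tWhiskerRight f F i ≫ cSnd E' F π i j h = cSnd E F π i j h ≫ f j := by
  simp only [cSnd_eq, Preadditive.comp_zsmul, Preadditive.zsmul_comp,
    reassoc_of% tWhiskerRight_comp_tπ f, ← whisker_exchange_assoc, rightUnitor_naturality,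
    Category.assoc]

variable {P : ℕ → C} {dP : ∀ i, P (i + 1) ⟶ P i}

lemma tD_comp_tπ (j k i : ℕ) (h : j + k = i) :
    tD P dP i ≫ tπ P P j k i h =
      tπ P P (j + 1) k (i + 1) (by omega) ≫ dP j ▷ P k +
        ((-1 : ℤ) ^ j) • (tπ P P j (k + 1) (i + 1) (by omega) ≫ P j ◁ dP k) := by
  obtain rfl : k = i - j := by omega
  refine biproduct.hom_ext' _ _ fun ⟨l, hl⟩ => ?_
  simp only [tD, tπ, eqToHom_refl, whiskerLeft_id, Category.comp_id, biproduct.matrix_π,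
    biproduct.ι_desc, Preadditive.comp_add, Preadditive.comp_zsmul, Category.assoc]
  congr 1
  · by_cases hlj : l = j + 1
    · subst hlj
      simp
    · rw [biproduct.ι_π_ne_assoc _ (by simpa [Fin.ext_iff] using hlj)]
      simp [hlj]
  · by_cases hlj : l = j
    · subst hlj
      simp
    · rw [biproduct.ι_π_ne_assoc _ (by simpa [Fin.ext_iff] using hlj)]
      simp [hlj]

lemma tWhiskerRight_comp_tD {f : ∀ i, P i ⟶ P i} (hf : ∀ i, f (i + 1) ≫ dP i = dP i ≫ f i)
    (i : ℕ) :
    tWhiskerRight f P (i + 1) ≫ tD P dP i = tD P dP i ≫ tWhiskerRight f P i := by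
  refine tOb_hom_ext fun j k h => ?_
  simp only [Category.assoc, tD_comp_tπ, reassoc_of% tD_comp_tπ (dP := dP),
    tWhiskerRight_comp_tπ, reassoc_of% tWhiskerRight_comp_tπ f,
    Preadditive.comp_add, Preadditive.add_comp, Preadditive.comp_zsmul, Preadditive.zsmul_comp,
    ← comp_whiskerRight, hf, whisker_exchange]

end TensorComplex

section Cocycle

lemma cFst_zero {E F : ℕ → C} {m : ℕ} (i j : ℕ) (h : i = j + m) :
    cFst E F (0 : E m ⟶ 𝟙_ C) i j h = 0 := by
  simp [cFst]

variable {P : ℕ → C} {dP : ∀ i, P (i + 1) ⟶ P i}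

lemma tD_comp_cFst {m : ℕ} {π : P m ⟶ 𝟙_ C} (hπ : dP m ≫ π = 0) (i j : ℕ) (h : i = j + m) :
    tD P dP i ≫ cFst P P π i j h =
      ((-1 : ℤ) ^ m) • (cFst P P π (i + 1) (j + 1) (by omega) ≫ dP j) := by
  have h_cocycle : dP m ▷ P j ≫ π ▷ P j = 0 := by
    rw [← comp_whiskerRight, hπ, MonoidalPreadditive.zero_whiskerRight]
  simp only [cFst_eq, reassoc_of% tD_comp_tπ (dP := dP), Preadditive.add_comp,
    Preadditive.zsmul_comp, Category.assoc, reassoc_of% h_cocycle, zero_comp, comp_zero, zero_add,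
    whisker_exchange_assoc, leftUnitor_naturality]

lemma tD_comp_cSnd {m : ℕ} {π : P m ⟶ 𝟙_ C} (hπ : dP m ≫ π = 0) (i j : ℕ) (h : i = j + m) :
    tD P dP i ≫ cSnd P P π i j h =
      ((-1 : ℤ) ^ m) • (cSnd P P π (i + 1) (j + 1) (by omega) ≫ dP j) := by
  have h_cocycle : P j ◁ dP m ≫ P j ◁ π = 0 := by
    rw [← MonoidalCategory.whiskerLeft_comp, hπ, MonoidalPreadditive.whiskerLeft_zero]
  have h_sign : (-1 : ℤ) ^ m * (-1) ^ (m * (j + 1)) = (-1) ^ (m * j) := by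
    rw [← pow_add, show m + m * (j + 1) = m * j + 2 * m by ring, pow_add, pow_mul]
    simp
  simp only [cSnd_eq, reassoc_of% tD_comp_tπ (dP := dP), Preadditive.comp_zsmul,
    Preadditive.add_comp, Preadditive.zsmul_comp, Category.assoc, reassoc_of% h_cocycle, zero_comp,
    comp_zero, smul_zero, add_zero, ← whisker_exchange_assoc, rightUnitor_naturality, smul_smul,
    h_sign]

end Cocycle

section CounitContraction

omit [MonoidalPreadditive C]

variable {P : ℕ → C} {μ : P 0 ⟶ 𝟙_ C} {Δ : ∀ i, P i ⟶ tOb P P i}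

lemma cFst_comp_augmentation (μ : P 0 ⟶ 𝟙_ C) : cFst P P μ 0 0 rfl ≫ μ = tAug P μ := by
  simp [cFst, tAug, MonoidalCategory.tensorHom_def]

lemma cSnd_comp_augmentation (μ : P 0 ⟶ 𝟙_ C) : cSnd P P μ 0 0 rfl ≫ μ = tAug P μ := by
  simp [cSnd, tAug, tensorHom_def', unitors_equal]

/-- The left counit contraction `α_P = (μ ⊗ 1_P)Δ : P ⟶ P`. -/
noncomputable def counitFst (μ : P 0 ⟶ 𝟙_ C) (Δ : ∀ i, P i ⟶ tOb P P i) (i : ℕ) : P i ⟶ P i :=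
  Δ i ≫ cFst P P μ i i rfl

/-- The right counit contraction `β_P = (1_P ⊗ μ)Δ : P ⟶ P`. -/
noncomputable def counitSnd (μ : P 0 ⟶ 𝟙_ C) (Δ : ∀ i, P i ⟶ tOb P P i) (i : ℕ) : P i ⟶ P i :=
  Δ i ≫ cSnd P P μ i i rfl

lemma counitFst_comp_augmentation (hΔμ : Δ 0 ≫ tAug P μ = μ) : counitFst μ Δ 0 ≫ μ = μ := by
  rw [counitFst, Category.assoc, cFst_comp_augmentation, hΔμ]

lemma counitSnd_comp_augmentation (hΔμ : Δ 0 ≫ tAug P μ = μ) : counitSnd μ Δ 0 ≫ μ = μ := by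
  rw [counitSnd, Category.assoc, cSnd_comp_augmentation, hΔμ]

end CounitContraction

section CorrectedDiagonal

variable {P : ℕ → C} {dP : ∀ i, P (i + 1) ⟶ P i} {μ : P 0 ⟶ 𝟙_ C} {Δ : ∀ i, P i ⟶ tOb P P i}

lemma counitFst_comp_differential (hμ : dP 0 ≫ μ = 0)
    (hΔd : ∀ i, Δ (i + 1) ≫ tD P dP i = dP i ≫ Δ i) (i : ℕ) :
    counitFst μ Δ (i + 1) ≫ dP i = dP i ≫ counitFst μ Δ i :=
  calc counitFst μ Δ (i + 1) ≫ dP i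
    _ = Δ (i + 1) ≫ tD P dP i ≫ cFst P P μ i i rfl := by simp [counitFst, tD_comp_cFst hμ]
    _ = dP i ≫ counitFst μ Δ i := by rw [reassoc_of% hΔd, counitFst]

lemma counitSnd_comp_differential (hμ : dP 0 ≫ μ = 0)
    (hΔd : ∀ i, Δ (i + 1) ≫ tD P dP i = dP i ≫ Δ i) (i : ℕ) :
    counitSnd μ Δ (i + 1) ≫ dP i = dP i ≫ counitSnd μ Δ i :=
  calc counitSnd μ Δ (i + 1) ≫ dP i
    _ = Δ (i + 1) ≫ tD P dP i ≫ cSnd P P μ i i rfl := by simp [counitSnd, tD_comp_cSnd hμ]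
    _ = dP i ≫ counitSnd μ Δ i := by rw [reassoc_of% hΔd, counitSnd]

omit [MonoidalPreadditive C] in
lemma DeltaPrime_eq (i : ℕ) :
    DeltaPrime P μ Δ i =
      Δ i ≫ tWhiskerRight (fun a => counitFst μ Δ a - counitSnd μ Δ a) P i +
        counitSnd μ Δ i ≫ Δ i :=
  rfl

lemma DeltaPrime_comp_tD (hμ : dP 0 ≫ μ = 0)
    (hΔd : ∀ i, Δ (i + 1) ≫ tD P dP i = dP i ≫ Δ i) (i : ℕ) :
    DeltaPrime P μ Δ (i + 1) ≫ tD P dP i = dP i ≫ DeltaPrime P μ Δ i := by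
  have hβ := counitSnd_comp_differential hμ hΔd
  have h_sub (a : ℕ) : (counitFst μ Δ (a + 1) - counitSnd μ Δ (a + 1)) ≫ dP a =
      dP a ≫ (counitFst μ Δ a - counitSnd μ Δ a) := by
    rw [Preadditive.sub_comp, Preadditive.comp_sub, counitFst_comp_differential hμ hΔd, hβ]
  have h_tD := tWhiskerRight_comp_tD (f := fun a => counitFst μ Δ a - counitSnd μ Δ a) h_sub i
  simp only [DeltaPrime_eq, Preadditive.add_comp, Preadditive.comp_add, Category.assoc,
    h_tD, reassoc_of% hΔd, hΔd, reassoc_of% hβ]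

lemma DeltaPrime_comp_cFst (hΔμ : Δ 0 ≫ tAug P μ = μ) (i : ℕ) :
    DeltaPrime P μ Δ i ≫ cFst P P μ i i rfl = counitSnd μ Δ i ≫ counitFst μ Δ i := by
  have h_sub : (counitFst μ Δ 0 - counitSnd μ Δ 0) ≫ μ = 0 := by
    rw [Preadditive.sub_comp, counitFst_comp_augmentation hΔμ, counitSnd_comp_augmentation hΔμ,
      sub_self]
  rw [DeltaPrime_eq, Preadditive.add_comp, Category.assoc, tWhiskerRight_comp_cFst, h_sub,
    cFst_zero, comp_zero, zero_add, Category.assoc, ← counitFst]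

omit [MonoidalPreadditive C] in
lemma DeltaPrime_comp_cSnd (i : ℕ) :
    DeltaPrime P μ Δ i ≫ cSnd P P μ i i rfl = counitSnd μ Δ i ≫ counitFst μ Δ i := by
  rw [DeltaPrime_eq, Preadditive.add_comp, Category.assoc, tWhiskerRight_comp_cSnd,
    ← Category.assoc, Category.assoc (counitSnd μ Δ i), ← counitSnd, Preadditive.comp_sub,
    sub_add_cancel]

lemma DeltaPrime_comp_tAug (hΔμ : Δ 0 ≫ tAug P μ = μ) : DeltaPrime P μ Δ 0 ≫ tAug P μ = μ := by
  rw [← cFst_comp_augmentation, reassoc_of% DeltaPrime_comp_cFst hΔμ,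
    counitFst_comp_augmentation hΔμ, counitSnd_comp_augmentation hΔμ]

end CorrectedDiagonal

theorem stmt6 (P : ℕ → C) (dP : ∀ i, P (i + 1) ⟶ P i)
    -- `P` is a chain complex
    (hPP : ∀ i, dP (i + 1) ≫ dP i = 0)
    -- `μ : P ⟶ 𝟙` is a degree 0 chain map
    (μ : P 0 ⟶ 𝟙_ C) (hμ : dP 0 ≫ μ = 0)
    -- `Δ : P ⟶ P ⊗ P` is a degree 0 chain map with `(μ ⊗ μ)Δ = μ`
    (Δ : ∀ i, P i ⟶ tOb P P i)
    (hΔd : ∀ i, Δ (i + 1) ≫ tD P dP i = dP i ≫ Δ i)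
    (hΔμ : Δ 0 ≫ tAug P μ = μ) :
    -- `Δ'` is a degree 0 chain map,
    (∀ i, DeltaPrime P μ Δ (i + 1) ≫ tD P dP i = dP i ≫ DeltaPrime P μ Δ i) ∧
    -- satisfying `(μ ⊗ μ)Δ' = μ`,
    (DeltaPrime P μ Δ 0 ≫ tAug P μ = μ) ∧
    -- and `(μ ⊗ 1_P)Δ' = (1_P ⊗ μ)Δ'`
    (∀ i, DeltaPrime P μ Δ i ≫ cFst P P μ i i rfl =
          DeltaPrime P μ Δ i ≫ cSnd P P μ i i rfl) :=
  ⟨DeltaPrime_comp_tD hμ hΔd, DeltaPrime_comp_tAug hΔμ,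
    fun i => (DeltaPrime_comp_cFst hΔμ i).trans (DeltaPrime_comp_cSnd i).symm⟩
end

section
/- Let C be an abelian monoidal category with unit 𝟙 whose tensor product is additive in each variable, let (P,d,μ_P) be a projective resolution of 𝟙, and let Δ_P : P ⟶ P⊗P be a morphism of resolutions satisfying (μ_P⊗1_P)Δ_P = (1_P⊗μ_P)Δ_P (via the unitors). Let f : P ⟶ 𝟙 be a degree n cocycle and ψ_f a homotopy lifting of (f,Δ_P). Then there exists a homotopy lifting ψ'_f of (f,Δ_P) such that ψ'_f ∼ ψ_f and μ_P∘ψ'_f = 0. -/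
/-!
STATEMENT 8: if `(μ_P ⊗ 1_P)Δ_P = (1_P ⊗ μ_P)Δ_P` then any homotopy lifting `ψ_f` of
`(f, Δ_P)` is homotopic to a homotopy lifting `ψ'_f` with `μ_P ∘ ψ'_f = 0`
(second assertion of the paper's Remark 4.10).
-/

open CategoryTheory CategoryTheory.Limits CategoryTheory.MonoidalCategory

universe v u

attribute [local instance] CategoryTheory.Abelian.hasFiniteBiproducts

variable {C : Type u} [Category.{v} C] [Abelian C] [MonoidalCategory C] [MonoidalPreadditive C]

/-!
Since the two contractions agree, the morphism `ψ` in the definition of a homotopy lifting is a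
cycle of degree `-1`. Its source is projective and its target is exact in positive degrees, so
`ψ = ∂ t`; as `f` is a cocycle, `f ψ = f ∂(t)` is null-homotopic, and hence so is `μ ψ_f`.
A null-homotopy of `μ ψ_f` lifts along the epimorphism `μ : P₀ ⟶ 𝟙` to a morphism `s : P ⟶ P`
concentrated in one degree, whose sign is chosen so that `μ (ψ_f + ∂ s) = 0`; adding `∂ s` does
not affect `∂ ψ_f`.
-/

section DegreeMorphisms

variable {D : Type*} [Category D] [Abelian D] {E F : ℕ → D}

namespace DH

variable {n : ℤ}

instance : Zero (DH E F n) := ⟨fun _ _ _ => 0⟩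

instance : Add (DH E F n) := ⟨fun f g i j h => f i j h + g i j h⟩

instance : Neg (DH E F n) := ⟨fun f i j h => -f i j h⟩

instance : AddCommGroup (DH E F n) where
  nsmul := nsmulRec
  zsmul := zsmulRec
  add_assoc _ _ _ := by funext i j h; exact add_assoc _ _ _
  zero_add _ := by funext i j h; exact zero_add _
  add_zero _ := by funext i j h; exact add_zero _
  neg_add_cancel _ := by funext i j h; exact neg_add_cancel _
  add_comm _ _ := by funext i j h; exact add_comm _ _
  sub_eq_add_neg _ _ := by funext i j h; exact sub_eq_add_neg _ _

@[simp] lemma zero_apply (i j : ℕ) (h : (i : ℤ) = j + n) : (0 : DH E F n) i j h = 0 := rfl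

@[simp] lemma add_apply (f g : DH E F n) (i j : ℕ) (h : (i : ℤ) = j + n) :
    (f + g) i j h = f i j h + g i j h := rfl

/-- The degree `n` morphism whose only possibly nonzero component is `b : E k ⟶ F l`. -/
noncomputable def single {k l : ℕ} (b : E k ⟶ F l) : DH E F n := fun i j _ =>
  if h : i = k ∧ j = l then eqToHom (congrArg E h.1) ≫ b ≫ eqToHom (congrArg F h.2.symm) else 0

lemma single_apply_self {k l : ℕ} (b : E k ⟶ F l) (h : (k : ℤ) = l + n) :
    single b k l h = b := by
  simp [single]

lemma single_apply_of_ne {k l i j : ℕ} (b : E k ⟶ F l) (h : (i : ℤ) = j + n) (hi : i ≠ k) :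
    single b i j h = 0 :=
  dif_neg fun hij => hi hij.1

end DH

variable (dE : ∀ i, E (i + 1) ⟶ E i) (dF : ∀ i, F (i + 1) ⟶ F i) {l m n : ℤ}

lemma pdel_apply_zero (hm : m = n + 1) (f : DH E F n) (j : ℕ) (h : ((0 : ℕ) : ℤ) = j + m) :
    pdel dE dF hm f 0 j h = f 0 (j + 1) (by push_cast at h ⊢; omega) ≫ dF j := by
  simp [pdel]

lemma pdel_apply_succ (hm : m = n + 1) (f : DH E F n) (i j : ℕ)
    (h : ((i + 1 : ℕ) : ℤ) = j + m) :
    pdel dE dF hm f (i + 1) j h =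
      f (i + 1) (j + 1) (by push_cast at h ⊢; omega) ≫ dF j -
        (n.negOnePow : ℤ) • (dE i ≫ f i j (by push_cast at h; omega)) := rfl

lemma pdel_add (hm : m = n + 1) (f g : DH E F n) :
    pdel dE dF hm (f + g) = pdel dE dF hm f + pdel dE dF hm g := by
  funext i j h
  cases i with
  | zero => simp only [pdel_apply_zero, DH.add_apply, Preadditive.add_comp]
  | succ i =>
    simp only [pdel_apply_succ, DH.add_apply, Preadditive.add_comp, Preadditive.comp_add, smul_add]
    abel

@[simp] lemma pdel_zero (hm : m = n + 1) : pdel dE dF hm (0 : DH E F n) = 0 := by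
  simpa only [add_zero, left_eq_add] using pdel_add dE dF hm 0 0

variable {dE dF}

lemma pdel_pdel (hE : ∀ i, dE (i + 1) ≫ dE i = 0) (hF : ∀ i, dF (i + 1) ≫ dF i = 0)
    (hm : m = n + 1) (hl : l = m + 1) (f : DH E F n) :
    pdel dE dF hl (pdel dE dF hm f) = 0 := by
  subst hm
  funext i j h
  rcases i with _ | _ | i
  · simp [pdel_apply_zero, hF]
  · simp [pdel_apply_zero, pdel_apply_succ, hF, Int.negOnePow_succ]
  · simp [pdel_apply_succ, hF, Int.negOnePow_succ, reassoc_of% hE i]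

lemma exists_comp_eq_of_exact (hF : ∀ i, dF (i + 1) ≫ dF i = 0)
    (hex : ∀ i, (ShortComplex.mk _ _ (hF i)).Exact) (hm : m = n + 1) (hneg : m < 0)
    {X : D} [Projective X] {i : ℕ} (a : ∀ j : ℕ, (i : ℤ) = j + m → (X ⟶ F j))
    (ha : ∀ j h, a (j + 1) h ≫ dF j = 0) :
    ∃ b : ∀ j : ℕ, (i : ℤ) = j + n → (X ⟶ F j),
      ∀ j h, b (j + 1) (by push_cast; omega) ≫ dF j = a j h := by
  refine ⟨fun
    | 0, _ => 0
    | 1, _ => 0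
    | j + 2, h => (hex j).liftFromProjective (a (j + 1) (by push_cast at h ⊢; omega)) (ha j _), ?_⟩
  rintro (_ | j) h
  · omega
  · exact (hex j).liftFromProjective_comp _ _

theorem exists_pdel_eq_of_pdel_eq_zero [∀ i, Projective (E i)]
    (hE : ∀ i, dE (i + 1) ≫ dE i = 0) (hF : ∀ i, dF (i + 1) ≫ dF i = 0)
    (hex : ∀ i, (ShortComplex.mk _ _ (hF i)).Exact) (hm : m = n + 1) (hl : l = m + 1)
    (hneg : m < 0) (g : DH E F m) (hg : pdel dE dF hl g = 0) :
    ∃ t : DH E F n, pdel dE dF hm t = g := by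
  have hsign : (m.negOnePow : ℤ) = -n.negOnePow := by rw [hm, Int.negOnePow_succ, Units.val_neg]
  let T (i : ℕ) := ∀ j : ℕ, (i : ℤ) = j + n → (E i ⟶ F j)
  -- The condition under which the component `t` of a solution extends to the next degree.
  let Extendable (i : ℕ) (t : T i) : Prop := ∀ j h,
    dE i ≫ t (j + 1) (by push_cast; omega) ≫ dF j = dE i ≫ g i j h
  obtain ⟨t₀, ht₀⟩ : ∃ t₀ : T 0, ∀ j h, t₀ (j + 1) (by push_cast; omega) ≫ dF j = g 0 j h :=
    exists_comp_eq_of_exact hF hex hm hneg (g 0) fun j h => by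
      rw [← pdel_apply_zero dE dF hl g j (by push_cast at h ⊢; omega), hg, DH.zero_apply]
  have step (i : ℕ) (t : {t : T i // Extendable i t}) :
      ∃ t' : {t' : T (i + 1) // Extendable (i + 1) t'}, ∀ j h,
        t'.1 (j + 1) (by push_cast at h ⊢; omega) ≫ dF j =
          g (i + 1) j h + (n.negOnePow : ℤ) • (dE i ≫ t.1 j (by push_cast at h; omega)) := by
    obtain ⟨t', ht'⟩ := exists_comp_eq_of_exact hF hex hm hneg
      (fun j h => g (i + 1) j h + (n.negOnePow : ℤ) • (dE i ≫ t.1 j (by push_cast at h; omega)))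
      fun j h => by
        have hgij := congrFun (congrFun (congrFun hg (i + 1)) j) (by push_cast at h ⊢; omega)
        simpa [pdel_apply_succ, hsign, t.2 j (by push_cast at h; omega)] using hgij
    exact ⟨⟨t', fun j h => by rw [ht' j h]; simp [reassoc_of% hE i]⟩, ht'⟩
  choose extend hextend using step
  let t (i : ℕ) : {t : T i // Extendable i t} :=
    Nat.rec ⟨t₀, fun j h => by rw [ht₀]⟩ extend i
  refine ⟨fun i => (t i).1, ?_⟩
  funext i j h
  cases i with
  | zero => rw [pdel_apply_zero]; exact ht₀ j h
  | succ i => rw [pdel_apply_succ]; exact sub_eq_of_eq_add (hextend i (t i) j h)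

end DegreeMorphisms

section Augmentation

variable {D : Type*} [Category D] [Abelian D] [MonoidalCategory D] {E P : ℕ → D}
  {dE : ∀ i, E (i + 1) ⟶ E i} {dP : ∀ i, P (i + 1) ⟶ P i}

lemma homotopicToUnit_zero_iff {u v : E 0 ⟶ 𝟙_ D} : homotopicToUnit E dE 0 u v ↔ u = v :=
  Iff.rfl

lemma homotopicToUnit_succ_iff {k : ℕ} {u v : E (k + 1) ⟶ 𝟙_ D} :
    homotopicToUnit E dE (k + 1) u v ↔ ∃ s : E k ⟶ 𝟙_ D, u - v = dE k ≫ s := by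
  have hsign : ((-1 : ℤ) ^ (k + 1)) * (-1) ^ (k + 1) = 1 := by simp [← mul_pow]
  constructor
  · rintro ⟨s, hs⟩
    exact ⟨((-1 : ℤ) ^ (k + 1)) • s, by simpa using hs⟩
  · rintro ⟨s, hs⟩
    exact ⟨((-1 : ℤ) ^ (k + 1)) • s, by simpa [smul_smul, hsign] using hs⟩

namespace homotopicToUnit

variable {k : ℕ} {u v w : E k ⟶ 𝟙_ D}

lemma refl (u : E k ⟶ 𝟙_ D) : homotopicToUnit E dE k u u := by
  cases k with
  | zero => rfl
  | succ k => exact homotopicToUnit_succ_iff.2 ⟨0, by simp⟩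

lemma trans (huv : homotopicToUnit E dE k u v) (hvw : homotopicToUnit E dE k v w) :
    homotopicToUnit E dE k u w := by
  cases k with
  | zero => exact Eq.trans huv hvw
  | succ k =>
    obtain ⟨s, hs⟩ := homotopicToUnit_succ_iff.1 huv
    obtain ⟨s', hs'⟩ := homotopicToUnit_succ_iff.1 hvw
    exact homotopicToUnit_succ_iff.2
      ⟨s + s', by rw [Preadditive.comp_add, ← hs, ← hs', sub_add_sub_cancel]⟩

lemma zsmul (a : ℤ) (huv : homotopicToUnit E dE k u v) :
    homotopicToUnit E dE k (a • u) (a • v) := by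
  cases k with
  | zero => exact congrArg (a • ·) huv
  | succ k =>
    obtain ⟨s, hs⟩ := homotopicToUnit_succ_iff.1 huv
    exact homotopicToUnit_succ_iff.2 ⟨a • s, by rw [Preadditive.comp_zsmul, ← hs, smul_sub]⟩

end homotopicToUnit

variable {m n : ℤ}

lemma homotopicToUnit_pdel_comp_zero {k q : ℕ} {f : P q ⟶ 𝟙_ D} (hf : dP q ≫ f = 0)
    (hm : m = n + 1) (t : DH E P n) (h : (k : ℤ) = q + m) :
    homotopicToUnit E dE k (pdel dE dP hm t k q h ≫ f) 0 := by
  cases k with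
  | zero =>
    rw [homotopicToUnit_zero_iff, pdel_apply_zero, Category.assoc, hf, comp_zero]
  | succ k =>
    exact homotopicToUnit_succ_iff.2
      ⟨-(n.negOnePow : ℤ) • (t k q (by push_cast at h; omega) ≫ f),
        by simp [pdel_apply_succ, hf]⟩

lemma exists_add_pdel_comp_eq_zero [∀ i, Projective (E i)] (μ : P 0 ⟶ 𝟙_ D) [Epi μ]
    (hm : m = n + 1) (g : DH E P m) {k : ℕ} (h : (k : ℤ) = (0 : ℕ) + m)
    (hg : homotopicToUnit E dE k (g k 0 h ≫ μ) 0) :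
    ∃ s : DH E P n, (g + pdel dE dP hm s) k 0 h ≫ μ = 0 := by
  cases k with
  | zero => exact ⟨0, by simpa using homotopicToUnit_zero_iff.1 hg⟩
  | succ k =>
    obtain ⟨r, hr⟩ := homotopicToUnit_succ_iff.1 hg
    rw [sub_zero] at hr
    have hsign : (n.negOnePow : ℤ) * n.negOnePow = 1 := by
      rw [← Units.val_mul, Int.units_mul_self, Units.val_one]
    refine ⟨DH.single ((n.negOnePow : ℤ) • Projective.factorThru r μ), ?_⟩
    rw [DH.add_apply, pdel_apply_succ, DH.single_apply_self,
      DH.single_apply_of_ne _ _ k.succ_ne_self]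
    simp [hr, smul_smul, hsign]

end Augmentation

section HomotopyLifting

variable {D : Type*} [Category D] [Abelian D] [MonoidalCategory D]

section

variable {P : ℕ → D} {dP : ∀ i, P (i + 1) ⟶ P i} {μ : P 0 ⟶ 𝟙_ D} {Δ : ∀ i, P i ⟶ tOb P P i}
  {n : ℕ} {hn : 1 ≤ n} {f : P n ⟶ 𝟙_ D} {ψf : DH P P ((n : ℤ) - 1)}

lemma counitRHS_eq_zero (hΔ : ∀ i, Δ i ≫ cFst P P μ i i rfl = Δ i ≫ cSnd P P μ i i rfl) :
    counitRHS P μ Δ = 0 := by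
  funext i j h
  obtain rfl : i = j := by omega
  exact sub_eq_zero.2 (hΔ i)

lemma IsHomotopyLifting.comp_homotopic_zero [∀ i, Projective (P i)]
    (hP : ∀ i, dP (i + 1) ≫ dP i = 0) (hex : ∀ i, (ShortComplex.mk _ _ (hP i)).Exact)
    (hΔ : counitRHS P μ Δ = 0) (hf : dP n ≫ f = 0) (h : IsHomotopyLifting P dP μ Δ n hn f ψf) :
    homotopicToUnit P dP (n - 1) (ψf (n - 1) 0 (by omega) ≫ μ) 0 := by
  obtain ⟨-, ψ, hψ, hψf⟩ := h
  obtain ⟨t, rfl⟩ := exists_pdel_eq_of_pdel_eq_zero hP hP hex (n := -2) (by norm_num) _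
    (by norm_num) ψ (hψ.trans hΔ)
  refine hψf.trans ?_
  simpa only [smul_zero] using
    (homotopicToUnit_pdel_comp_zero hf (by norm_num) t (by omega)).zsmul ((-1) ^ (n + 1))

lemma isHomotopyLifting_of_comp_eq_zero (hΔ : counitRHS P μ Δ = 0)
    (hψf : pdel dP dP (show (n : ℤ) = ((n : ℤ) - 1) + 1 by ring) ψf = liftRHS P Δ n f)
    (hμ : ψf (n - 1) 0 (by omega) ≫ μ = 0) : IsHomotopyLifting P dP μ Δ n hn f ψf := by
  refine ⟨hψf, 0, by rw [pdel_zero, hΔ], ?_⟩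
  simpa only [hμ, DH.zero_apply, zero_comp, smul_zero] using homotopicToUnit.refl 0

end

theorem stmt8_general (P : ℕ → D) (dP : ∀ i, P (i + 1) ⟶ P i) [∀ i, Projective (P i)]
    (hP : ∀ i, dP (i + 1) ≫ dP i = 0) (hex : ∀ i, (ShortComplex.mk _ _ (hP i)).Exact)
    (μ : P 0 ⟶ 𝟙_ D) [Epi μ] (Δ : ∀ i, P i ⟶ tOb P P i)
    (hΔ : ∀ i, Δ i ≫ cFst P P μ i i rfl = Δ i ≫ cSnd P P μ i i rfl)
    (n : ℕ) (hn : 1 ≤ n) (f : P n ⟶ 𝟙_ D) (hf : dP n ≫ f = 0) (ψf : DH P P ((n : ℤ) - 1))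
    (hψf : IsHomotopyLifting P dP μ Δ n hn f ψf) :
    ∃ ψ'f : DH P P ((n : ℤ) - 1),
      IsHomotopyLifting P dP μ Δ n hn f ψ'f ∧
      (∃ s : DH P P ((n : ℤ) - 2),
        ψ'f - ψf = pdel dP dP (show (n : ℤ) - 1 = ((n : ℤ) - 2) + 1 by ring) s) ∧
      ψ'f (n - 1) 0 (by omega) ≫ μ = 0 := by
  have hcounit := counitRHS_eq_zero hΔ
  obtain ⟨s, hs⟩ := exists_add_pdel_comp_eq_zero (n := (n : ℤ) - 2) μ (by ring) ψf _
    (hψf.comp_homotopic_zero hP hex hcounit hf)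
  refine ⟨ψf + pdel dP dP _ s, isHomotopyLifting_of_comp_eq_zero hcounit ?_ hs,
    ⟨s, add_sub_cancel_left _ _⟩, hs⟩
  rw [pdel_add, pdel_pdel hP hP, add_zero, hψf.1]

end HomotopyLifting

theorem stmt8 (P : ℕ → C) (dP : ∀ i, P (i + 1) ⟶ P i)
    -- `(P, dP, μ)` is a projective resolution of `𝟙`
    (hPP : ∀ i, dP (i + 1) ≫ dP i = 0)
    (hproj : ∀ i, Projective (P i))
    (μ : P 0 ⟶ 𝟙_ C) (hμd : dP 0 ≫ μ = 0) (hepi : Epi μ)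
    (hex0 : imageSubobject (dP 0) = kernelSubobject μ)
    (hex : ∀ i, imageSubobject (dP (i + 1)) = kernelSubobject (dP i))
    -- `Δ : P ⟶ P ⊗ P` is a morphism of resolutions
    (Δ : ∀ i, P i ⟶ tOb P P i)
    (hΔd : ∀ i, Δ (i + 1) ≫ tD P dP i = dP i ≫ Δ i)
    (hΔμ : Δ 0 ≫ tAug P μ = μ)
    -- with `(μ ⊗ 1_P)Δ = (1_P ⊗ μ)Δ` (via the unitors)
    (hΔcontr : ∀ i, Δ i ≫ cFst P P μ i i rfl = Δ i ≫ cSnd P P μ i i rfl)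
    -- `f` is a degree `n` cocycle
    (n : ℕ) (hn : 1 ≤ n) (f : P n ⟶ 𝟙_ C) (hf : dP n ≫ f = 0)
    -- `ψf` is a homotopy lifting of `(f, Δ)`
    (ψf : DH P P ((n : ℤ) - 1))
    (h1 : IsHomotopyLifting P dP μ Δ n hn f ψf) :
    -- then there is a homotopy lifting `ψ'f` of `(f, Δ)` with `ψ'f ∼ ψf` and `μ ∘ ψ'f = 0`
    ∃ ψ'f : DH P P ((n : ℤ) - 1),
      IsHomotopyLifting P dP μ Δ n hn f ψ'f ∧
      (∃ s : DH P P ((n : ℤ) - 2),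
        ψ'f - ψf = pdel dP dP (show (n : ℤ) - 1 = ((n : ℤ) - 2) + 1 by ring) s) ∧
      ψ'f (n - 1) 0 (by omega) ≫ μ = 0 := by
  exact stmt8_general P dP hPP
    (fun i => (ShortComplex.exact_iff_image_eq_kernel _).2 (hex i)) μ Δ hΔcontr n hn f hf ψf h1
end

section
/- Let C be an abelian monoidal category with unit 𝟙 whose tensor product is additive in each variable. Let P be an ℕ-indexed chain complex over C and Δ_P : P ⟶ P⊗P a degree 0 chain map. Let f : P ⟶ 𝟙 be a degree m cocycle and g : P ⟶ 𝟙 a degree n cocycle, with m, n ≥ 1, and let ψ_f, ψ_g : P ⟶ P be morphisms of degrees m−1 and n−1 respectively satisfying ∂(ψ_f) = (f⊗1_P − 1_P⊗f)Δ_P and ∂(ψ_g) = (g⊗1_P − 1_P⊗g)Δ_P. Then the degree (m+n−1) morphism [f,g] := f∘ψ_g − (−1)^{(m−1)(n−1)} g∘ψ_f : P ⟶ 𝟙 is a cocycle, i.e. its only nonzero component P_{m+n−1} ⟶ 𝟙 composed with d_{m+n−1} : P_{m+n} ⟶ P_{m+n−1} is zero. -/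
/-!
STATEMENT 9: the cochain-level bracket `[f,g] = f ψ_g - (-1)^{(m-1)(n-1)} g ψ_f` of two
cocycles `f, g : P ⟶ 𝟙` is again a cocycle (paper: the definition (4.13)).
-/

open CategoryTheory CategoryTheory.Limits CategoryTheory.MonoidalCategory

universe v u

attribute [local instance] CategoryTheory.Abelian.hasFiniteBiproducts

variable {C : Type u} [Category.{v} C] [Abelian C] [MonoidalCategory C] [MonoidalPreadditive C]

/-!
Write `f ⌣ g = (f ⊗ g)Δ`. Composing `∂(ψ_g) = (g ⊗ 1 - 1 ⊗ g)Δ` with `f` and using `df = 0` shows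
that the coboundary of `f ∘ ψ_g` is, up to sign, the graded commutator `f ⌣ g - (-1)^{mn} g ⌣ f`.
The graded commutator is graded antisymmetric, so the two terms of the bracket have the same
coboundary.
-/

lemma negOnePow_sub_one_mul_sub_one_mul (m n : ℤ) :
    ((m - 1) * (n - 1)).negOnePow * m.negOnePow * (m * n).negOnePow = -n.negOnePow := by
  rw [← Int.negOnePow_add, ← Int.negOnePow_add, ← Int.negOnePow_succ, Int.negOnePow_eq_iff]
  exact ⟨m * n - n, by ring⟩

lemma coe_negOnePow_sub_one_mul_sub_one {m n : ℕ} (hm : 1 ≤ m) (hn : 1 ≤ n) :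
    ((((m : ℤ) - 1) * ((n : ℤ) - 1)).negOnePow : ℤ) = (-1) ^ ((m - 1) * (n - 1)) := by
  rw [← Int.coe_negOnePow_natCast, Nat.cast_mul, Nat.cast_sub hm, Nat.cast_sub hn, Nat.cast_one]

omit [MonoidalCategory C] [MonoidalPreadditive C] in
lemma pdel_succ_comp_of_cocycle {E F : ℕ → C} (dE : ∀ i, E (i + 1) ⟶ E i)
    (dF : ∀ i, F (i + 1) ⟶ F i) {n m : ℤ} (hm : m = n + 1) (ψ : DH E F n) {k j : ℕ}
    (h : ((k + 1 : ℕ) : ℤ) = j + m) {A : C} (f : F j ⟶ A) (hf : dF j ≫ f = 0) :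
    pdel dE dF hm ψ (k + 1) j h ≫ f =
      (m.negOnePow : ℤ) • (dE k ≫ ψ k j (by omega) ≫ f) := by
  simp only [pdel, hm, Preadditive.sub_comp, Preadditive.zsmul_comp, Category.assoc, hf,
    comp_zero, zero_sub, Int.negOnePow_succ, Units.val_neg, neg_smul]

section TensorCochain

omit [MonoidalPreadditive C]

/-- The cochain `f ⊗ g : (E ⊗ F)_i ⟶ 𝟙 ⊗ 𝟙 ≅ 𝟙`, for `i = m + n`, of cochains `f` of degree `m`
and `g` of degree `n`. It includes the Koszul sign `(-1)^{nm}` from moving `g` past `E_m`. -/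
noncomputable def tensorCochain (E F : ℕ → C) {m n : ℕ} (f : E m ⟶ 𝟙_ C) (g : F n ⟶ 𝟙_ C)
    (i : ℕ) (h : i = m + n) : tOb E F i ⟶ 𝟙_ C :=
  ((-1 : ℤ) ^ (n * m)) •
    (biproduct.π (fun a : Fin (i + 1) => E a.1 ⊗ F (i - a.1)) ⟨m, by omega⟩ ≫
      (f ⊗ₘ (eqToHom (congrArg F (show i - m = n by omega)) ≫ g)) ≫ (λ_ (𝟙_ C)).hom)

lemma cSnd_comp (E F : ℕ → C) {m n : ℕ} (f : E m ⟶ 𝟙_ C) (g : F n ⟶ 𝟙_ C) (i : ℕ)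
    (h : i = m + n) : cSnd E F g i m h ≫ f = tensorCochain E F f g i h := by
  simp only [cSnd, tensorCochain, Preadditive.zsmul_comp, Category.assoc, tensorHom_def',
    unitors_equal, rightUnitor_naturality]

lemma cFst_comp (E F : ℕ → C) {m n : ℕ} (f : E m ⟶ 𝟙_ C) (g : F n ⟶ 𝟙_ C) (i : ℕ)
    (h : i = n + m) :
    cFst E F f i n h ≫ g =
      ((-1 : ℤ) ^ (n * m)) • tensorCochain E F f g i (h.trans (add_comm n m)) := by
  simp only [cFst, tensorCochain, smul_smul, ← mul_pow, neg_mul_neg, one_mul, one_pow, one_smul,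
    Category.assoc, MonoidalCategory.tensorHom_def, leftUnitor_naturality]

end TensorCochain

section CupProduct

omit [MonoidalPreadditive C]

variable (P : ℕ → C) (Δ : ∀ i, P i ⟶ tOb P P i) {m n : ℕ} (f : P m ⟶ 𝟙_ C) (g : P n ⟶ 𝟙_ C)
  (k : ℕ)

/-- The cup product `f ⌣ g = (f ⊗ g)Δ : P_k ⟶ 𝟙`, for `k = m + n`, of cochains `f` of degree `m`
and `g` of degree `n`. -/
noncomputable def cup (h : k = m + n) : P k ⟶ 𝟙_ C :=
  Δ k ≫ tensorCochain P P f g k h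

/-- The graded commutator `f ⌣ g - (-1)^{mn} g ⌣ f` for the cup product, in degree `k = m + n`. -/
noncomputable def cupCommutator (h : k = m + n) : P k ⟶ 𝟙_ C :=
  cup P Δ f g k h - ((-1 : ℤ) ^ (m * n)) • cup P Δ g f k (h.trans (add_comm m n))

lemma cupCommutator_swap (h : k = n + m) :
    cupCommutator P Δ g f k h =
      -(((-1 : ℤ) ^ (m * n)) • cupCommutator P Δ f g k (h.trans (add_comm n m))) := by
  rw [cupCommutator, cupCommutator, smul_sub, smul_smul, ← mul_pow, neg_mul_neg, one_mul, one_pow,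
    one_smul, neg_sub, mul_comm n m]

lemma liftRHS_comp (h : k = m + n) :
    liftRHS P Δ n g k m (by omega) ≫ f = -cupCommutator P Δ f g k h := by
  simp only [liftRHS, cupCommutator, cup, Preadditive.sub_comp, Category.assoc, cSnd_comp,
    cFst_comp, Preadditive.comp_zsmul, neg_sub]

end CupProduct

section Bracket

omit [MonoidalPreadditive C]

variable {P : ℕ → C} {dP : ∀ i, P (i + 1) ⟶ P i} {Δ : ∀ i, P i ⟶ tOb P P i} {m n : ℕ}

lemma d_comp_lifting_comp {f : P m ⟶ 𝟙_ C} (hf : dP m ≫ f = 0) {g : P n ⟶ 𝟙_ C}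
    {ψg : DH P P ((n : ℤ) - 1)} (hψg : pdel dP dP (by omega) ψg = liftRHS P Δ n g)
    {k : ℕ} (hk : k + 1 = m + n) :
    dP k ≫ ψg k m (by omega) ≫ f =
      -(((n : ℤ).negOnePow : ℤ) • cupCommutator P Δ f g (k + 1) hk) := by
  have h_coboundary := pdel_succ_comp_of_cocycle dP dP (show (n : ℤ) = (n : ℤ) - 1 + 1 by omega) ψg
    (show ((k + 1 : ℕ) : ℤ) = m + n by omega) f hf
  rw [hψg, liftRHS_comp P Δ f g (k + 1) hk] at h_coboundary
  rw [← smul_neg, h_coboundary, smul_smul, Int.units_coe_mul_self, one_smul]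

/-- The bracket `[f,g] = f ∘ ψ_g - (-1)^{(m-1)(n-1)} g ∘ ψ_f` of cochains `f` of degree `m` and `g`
of degree `n`, as its component on `P_k` for `k = m + n - 1`. The sign exponent is an integer, so
that the formula is also the intended one in degree `0`. -/
noncomputable def gerstenhaberBracket (f : P m ⟶ 𝟙_ C) (g : P n ⟶ 𝟙_ C)
    (ψf : DH P P ((m : ℤ) - 1)) (ψg : DH P P ((n : ℤ) - 1)) (k : ℕ) (hk : k + 1 = m + n) :
    P k ⟶ 𝟙_ C :=
  ψg k m (by omega) ≫ f -
    ((((m : ℤ) - 1) * ((n : ℤ) - 1)).negOnePow : ℤ) • (ψf k n (by omega) ≫ g)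

theorem stmt9_general {f : P m ⟶ 𝟙_ C} (hf : dP m ≫ f = 0) {g : P n ⟶ 𝟙_ C}
    (hg : dP n ≫ g = 0) {ψf : DH P P ((m : ℤ) - 1)}
    (hψf : pdel dP dP (by omega) ψf = liftRHS P Δ m f) {ψg : DH P P ((n : ℤ) - 1)}
    (hψg : pdel dP dP (by omega) ψg = liftRHS P Δ n g) {k : ℕ} (hk : k + 1 = m + n) :
    dP k ≫ gerstenhaberBracket f g ψf ψg k hk = 0 := by
  have h_sign : ((((m : ℤ) - 1) * ((n : ℤ) - 1)).negOnePow : ℤ) *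
      (((m : ℤ).negOnePow : ℤ) * (-1) ^ (m * n)) = -((n : ℤ).negOnePow : ℤ) := by
    rw [← Int.coe_negOnePow_natCast, Nat.cast_mul, ← mul_assoc]
    exact congrArg Units.val (negOnePow_sub_one_mul_sub_one_mul m n)
  have h_swapped : dP k ≫ ψf k n (by omega) ≫ g =
      (((m : ℤ).negOnePow : ℤ) * (-1) ^ (m * n)) • cupCommutator P Δ f g (k + 1) hk := by
    rw [d_comp_lifting_comp hg hψf (hk.trans (add_comm m n)), cupCommutator_swap P Δ f g,
      smul_neg, neg_neg, smul_smul]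
  rw [gerstenhaberBracket, Preadditive.comp_sub, Preadditive.comp_zsmul,
    d_comp_lifting_comp hf hψg hk, h_swapped, smul_smul, h_sign, neg_smul, sub_self]

end Bracket

theorem stmt9 (P : ℕ → C) (dP : ∀ i, P (i + 1) ⟶ P i)
    -- `P` is a chain complex
    (hPP : ∀ i, dP (i + 1) ≫ dP i = 0)
    -- `Δ : P ⟶ P ⊗ P` is a degree 0 chain map
    (Δ : ∀ i, P i ⟶ tOb P P i)
    (hΔd : ∀ i, Δ (i + 1) ≫ tD P dP i = dP i ≫ Δ i)
    -- `f` is a degree `m` cocycle and `g` a degree `n` cocycle, `m, n ≥ 1`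
    (m n : ℕ) (hm : 1 ≤ m) (hn : 1 ≤ n)
    (f : P m ⟶ 𝟙_ C) (hf : dP m ≫ f = 0)
    (g : P n ⟶ 𝟙_ C) (hg : dP n ≫ g = 0)
    -- `∂(ψf) = (f ⊗ 1_P - 1_P ⊗ f)Δ` and `∂(ψg) = (g ⊗ 1_P - 1_P ⊗ g)Δ`
    (ψf : DH P P ((m : ℤ) - 1))
    (hψf : pdel dP dP (show (m : ℤ) = ((m : ℤ) - 1) + 1 by ring) ψf = liftRHS P Δ m f)
    (ψg : DH P P ((n : ℤ) - 1))
    (hψg : pdel dP dP (show (n : ℤ) = ((n : ℤ) - 1) + 1 by ring) ψg = liftRHS P Δ n g) :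
    -- then `[f,g] = f ψ_g - (-1)^{(m-1)(n-1)} g ψ_f : P_{m+n-1} ⟶ 𝟙` is a cocycle
    dP (m + n - 1) ≫
      (ψg (m + n - 1) m (by omega) ≫ f -
        ((-1 : ℤ) ^ ((m - 1) * (n - 1))) • (ψf (m + n - 1) n (by omega) ≫ g)) = 0 := by
  rw [← coe_negOnePow_sub_one_mul_sub_one hm hn]
  exact stmt9_general hf hg hψf hψg (show m + n - 1 + 1 = m + n by omega)
end

section
/- Let C be an abelian monoidal category with unit 𝟙 whose tensor product is additive in each variable, let (P,d,μ_P) be a projective resolution of 𝟙, Δ_P : P ⟶ P⊗P a morphism of resolutions, f a degree m cocycle and g a degree n cocycle (m, n ≥ 1). If ψ_f, ψ'_f are homotopy liftings of (f,Δ_P) and ψ_g, ψ'_g are homotopy liftings of (g,Δ_P), then the cocycles f∘ψ_g − (−1)^{(m−1)(n−1)} g∘ψ_f and f∘ψ'_g − (−1)^{(m−1)(n−1)} g∘ψ'_f differ by a coboundary; hence the cohomology class of the bracket [f,g] does not depend on the choice of homotopy liftings. -/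
/-!
STATEMENT 10: the cohomology class of the bracket
`[f,g] = f ψ_g - (-1)^{(m-1)(n-1)} g ψ_f` does not depend on the choice of the homotopy
liftings `ψ_f, ψ_g` (well-definedness asserted after (4.13) in the paper).
-/

open CategoryTheory CategoryTheory.Limits CategoryTheory.MonoidalCategory

universe v u

attribute [local instance] CategoryTheory.Abelian.hasFiniteBiproducts

variable {C : Type u} [Category.{v} C] [Abelian C] [MonoidalCategory C] [MonoidalPreadditive C]

/-!
Let `ψ`, `ψ'` be homotopy liftings of `g`. Their difference is, up to a sign, a chain map
`P ⟶ P` of degree `n - 1`, and since `P` is a projective resolution it is null-homotopic as soon as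
`μ ∘ (ψ - ψ')` is a coboundary. By the second condition on homotopy liftings this holds if
`g ∘ (η - η')` is a coboundary, where `η`, `η'` are the degree `-1` morphisms attached to `ψ`, `ψ'`;
and `η - η'`, a chain map of degree `-1` up to a sign, is always null-homotopic. Composing a
null-homotopic map with the cocycle `f` gives a coboundary.
-/

section Coboundaries

variable {A : Type u} [Category.{v} A] [Preadditive A] {X : ℕ → A} {d : ∀ i, X (i + 1) ⟶ X i}
  {Y Z : A} {k : ℕ}

/-- The degree `k` coboundaries of the cochain complex `Hom(X, Z)`, which is zero in degree `-1`, so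
that `0` is the only coboundary in degree `0`. No sign is put on the differential `v ↦ d ≫ v`. -/
def coboundaries (d : ∀ i, X (i + 1) ⟶ X i) (Z : A) : ∀ k, AddSubgroup (X k ⟶ Z)
  | 0 => ⊥
  | k + 1 => (Preadditive.leftComp Z (d k)).range

theorem mem_coboundaries_zero {u : X 0 ⟶ Z} : u ∈ coboundaries d Z 0 ↔ u = 0 :=
  AddSubgroup.mem_bot

theorem mem_coboundaries_succ {u : X (k + 1) ⟶ Z} :
    u ∈ coboundaries d Z (k + 1) ↔ ∃ v, d k ≫ v = u :=
  Iff.rfl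

theorem mem_coboundaries_iff_exists_eqToHom_comp {l : ℕ} (h : k = l + 1) {u : X k ⟶ Z} :
    u ∈ coboundaries d Z k ↔ ∃ v : X l ⟶ Z, u = eqToHom (congrArg X h) ≫ d l ≫ v := by
  subst h
  simp only [mem_coboundaries_succ, eqToHom_refl, Category.id_comp, eq_comm]

theorem comp_mem_coboundaries {u : X k ⟶ Y} (hu : u ∈ coboundaries d Y k) (φ : Y ⟶ Z) :
    u ≫ φ ∈ coboundaries d Z k := by
  cases k with
  | zero => rw [mem_coboundaries_zero.1 hu, zero_comp]; exact zero_mem _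
  | succ k =>
    obtain ⟨v, rfl⟩ := mem_coboundaries_succ.1 hu
    exact mem_coboundaries_succ.2 ⟨v ≫ φ, (Category.assoc _ _ _).symm⟩

theorem comp_eq_zero_of_mem_coboundaries (hd : ∀ i, d (i + 1) ≫ d i = 0) {u : X k ⟶ Z}
    (hu : u ∈ coboundaries d Z k) : d k ≫ u = 0 := by
  cases k with
  | zero => rw [mem_coboundaries_zero.1 hu, comp_zero]
  | succ k =>
    obtain ⟨v, rfl⟩ := mem_coboundaries_succ.1 hu
    rw [reassoc_of% hd k, zero_comp]

theorem exists_mem_coboundaries_comp_eq [∀ i, Projective (X i)] (π : Y ⟶ Z) [Epi π]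
    {u : X k ⟶ Z} (hu : u ∈ coboundaries d Z k) : ∃ s ∈ coboundaries d Y k, s ≫ π = u := by
  cases k with
  | zero => exact ⟨0, zero_mem _, by rw [mem_coboundaries_zero.1 hu, zero_comp]⟩
  | succ k =>
    obtain ⟨v, rfl⟩ := mem_coboundaries_succ.1 hu
    exact ⟨d k ≫ Projective.factorThru v π, mem_coboundaries_succ.2 ⟨_, rfl⟩,
      by rw [Category.assoc, Projective.factorThru_comp]⟩

end Coboundaries

section NullHomotopic

variable {A : Type u} [Category.{v} A] [Preadditive A] {E F : ℕ → A}
  {dE : ∀ i, E (i + 1) ⟶ E i} {dF : ∀ i, F (i + 1) ⟶ F i}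

/-- `φ : E_i ⟶ F_j` has the form `d_F ∘ h + h' ∘ d_E`, as the components of a null-homotopic
morphism of any degree do; the second summand is absent when `i = 0`. -/
def IsNullHomotopicAt (dE : ∀ i, E (i + 1) ⟶ E i) (dF : ∀ i, F (i + 1) ⟶ F i) {i j : ℕ}
    (φ : E i ⟶ F j) : Prop :=
  ∃ h : E i ⟶ F (j + 1), φ - h ≫ dF j ∈ coboundaries dE (F j) i

theorem IsNullHomotopicAt.comp_cocycle_mem_coboundaries {i j : ℕ} {φ : E i ⟶ F j}
    (hφ : IsNullHomotopicAt dE dF φ) {Z : A} {f : F j ⟶ Z} (hf : dF j ≫ f = 0) :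
    φ ≫ f ∈ coboundaries dE Z i := by
  obtain ⟨h, hφ⟩ := hφ
  simpa only [Preadditive.sub_comp, Category.assoc, hf, comp_zero, sub_zero] using
    comp_mem_coboundaries hφ f

theorem IsNullHomotopicAt.of_sub_mem_coboundaries {i j : ℕ} {φ s : E i ⟶ F j}
    (h : IsNullHomotopicAt dE dF (φ - s)) (hs : s ∈ coboundaries dE (F j) i) :
    IsNullHomotopicAt dE dF φ := by
  obtain ⟨t, ht⟩ := h
  refine ⟨t, ?_⟩
  rw [show φ - t ≫ dF j = φ - s - t ≫ dF j + s by abel]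
  exact add_mem ht hs

end NullHomotopic

section Exact

variable {A : Type u} [Category.{v} A] [Abelian A] {E F : ℕ → A}
  {dE : ∀ i, E (i + 1) ⟶ E i} {dF : ∀ i, F (i + 1) ⟶ F i}

theorem isNullHomotopicAt_of_comp_eq_zero {i j : ℕ} [Projective (E i)] {Z : A} {π : F j ⟶ Z}
    {w : dF j ≫ π = 0} (hex : (ShortComplex.mk (dF j) π w).Exact) {φ : E i ⟶ F j}
    (hφ : φ ≫ π = 0) : IsNullHomotopicAt dE dF φ :=
  ⟨hex.liftFromProjective φ hφ, by
    rw [hex.liftFromProjective_comp, sub_self]; exact zero_mem _⟩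

theorem isNullHomotopicAt_of_comp_mem_coboundaries [∀ i, Projective (E i)] {i j : ℕ} {Z : A}
    {π : F j ⟶ Z} [Epi π] {w : dF j ≫ π = 0} (hex : (ShortComplex.mk (dF j) π w).Exact)
    {φ : E i ⟶ F j} (hφ : φ ≫ π ∈ coboundaries dE Z i) : IsNullHomotopicAt dE dF φ := by
  obtain ⟨s, hs, hsπ⟩ := exists_mem_coboundaries_comp_eq π hφ
  have hφs : (φ - s) ≫ π = 0 := by rw [Preadditive.sub_comp, hsπ, sub_self]
  exact (isNullHomotopicAt_of_comp_eq_zero hex hφs).of_sub_mem_coboundaries hs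

theorem IsNullHomotopicAt.succ (hE : ∀ i, dE (i + 1) ≫ dE i = 0) {i j : ℕ}
    [Projective (E (i + 1))] {w : dF (j + 1) ≫ dF j = 0}
    (hex : (ShortComplex.mk (dF (j + 1)) (dF j) w).Exact) {φ : E i ⟶ F j}
    {φ' : E (i + 1) ⟶ F (j + 1)} {ε : ℤ} (hcomm : φ' ≫ dF j = ε • (dE i ≫ φ))
    (hφ : IsNullHomotopicAt dE dF φ) : IsNullHomotopicAt dE dF φ' := by
  obtain ⟨h, hφ⟩ := hφ
  have hdφ : dE i ≫ φ = dE i ≫ h ≫ dF j := by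
    rw [← sub_eq_zero, ← Preadditive.comp_sub, comp_eq_zero_of_mem_coboundaries hE hφ]
  have hzero : (φ' - ε • (dE i ≫ h)) ≫ dF j = 0 := by
    rw [Preadditive.sub_comp, hcomm, hdφ, Preadditive.zsmul_comp, Category.assoc, sub_self]
  exact (isNullHomotopicAt_of_comp_eq_zero hex hzero).of_sub_mem_coboundaries
    (zsmul_mem (mem_coboundaries_succ.2 ⟨h, rfl⟩) ε)

end Exact

section EqualBoundaries

variable {A : Type u} [Category.{v} A] [Abelian A] {E F : ℕ → A}
  {dE : ∀ i, E (i + 1) ⟶ E i} {dF : ∀ i, F (i + 1) ⟶ F i} {p q : ℤ} {hq : q = p + 1}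
  {ψ ψ' : DH E F p}

theorem sub_comp_eq_zero_of_pdel_eq (h : pdel dE dF hq ψ = pdel dE dF hq ψ') {j : ℕ}
    (hj : ((0 : ℕ) : ℤ) = (j + 1 : ℕ) + p) : (ψ 0 (j + 1) hj - ψ' 0 (j + 1) hj) ≫ dF j = 0 := by
  have h₀ := congrFun (congrFun (congrFun h 0) j) (by omega)
  simp only [pdel, smul_zero, sub_zero] at h₀
  rw [Preadditive.sub_comp, h₀, sub_self]

theorem sub_comp_eq_zsmul_comp_sub_of_pdel_eq (h : pdel dE dF hq ψ = pdel dE dF hq ψ') {i j : ℕ}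
    (hij : (i : ℤ) = j + p) (hij' : ((i + 1 : ℕ) : ℤ) = (j + 1 : ℕ) + p) :
    (ψ (i + 1) (j + 1) hij' - ψ' (i + 1) (j + 1) hij') ≫ dF j =
      (p.negOnePow : ℤ) • (dE i ≫ (ψ i j hij - ψ' i j hij)) := by
  have hsucc := congrFun (congrFun (congrFun h (i + 1)) j) (by omega)
  simp only [pdel] at hsucc
  rw [Preadditive.sub_comp, Preadditive.comp_sub, smul_sub]
  exact sub_eq_sub_iff_sub_eq_sub.1 hsucc

theorem isNullHomotopicAt_sub_of_pdel_eq (hE : ∀ i, dE (i + 1) ≫ dE i = 0)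
    [∀ i, Projective (E i)] {hF : ∀ i, dF (i + 1) ≫ dF i = 0}
    (hex : ∀ i, (ShortComplex.mk (dF (i + 1)) (dF i) (hF i)).Exact)
    (h : pdel dE dF hq ψ = pdel dE dF hq ψ') {i₀ j₀ : ℕ} (h₀ : (i₀ : ℤ) = j₀ + p)
    (hnull : IsNullHomotopicAt dE dF (ψ i₀ j₀ h₀ - ψ' i₀ j₀ h₀)) {i j : ℕ} (hi : i₀ ≤ i)
    (hij : (i : ℤ) = j + p) : IsNullHomotopicAt dE dF (ψ i j hij - ψ' i j hij) := by
  induction i, hi using Nat.le_induction generalizing j with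
  | base =>
    obtain rfl : j = j₀ := by omega
    exact hnull
  | succ i hi ih =>
    obtain ⟨j, rfl⟩ : ∃ l, j = l + 1 := Nat.exists_eq_add_one.2 (by omega)
    exact (ih (by omega)).succ hE (hex j)
      (sub_comp_eq_zsmul_comp_sub_of_pdel_eq h (by omega) hij)

theorem isNullHomotopicAt_sub_of_pdel_eq_of_neg (hE : ∀ i, dE (i + 1) ≫ dE i = 0)
    [∀ i, Projective (E i)] {hF : ∀ i, dF (i + 1) ≫ dF i = 0}
    (hex : ∀ i, (ShortComplex.mk (dF (i + 1)) (dF i) (hF i)).Exact)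
    (h : pdel dE dF hq ψ = pdel dE dF hq ψ') (hp : p < 0) {i j : ℕ} (hij : (i : ℤ) = j + p) :
    IsNullHomotopicAt dE dF (ψ i j hij - ψ' i j hij) := by
  obtain ⟨k, hk⟩ : ∃ k : ℕ, ((0 : ℕ) : ℤ) = (k + 1 : ℕ) + p := ⟨(-p - 1).toNat, by omega⟩
  exact isNullHomotopicAt_sub_of_pdel_eq hE hex h hk
    (isNullHomotopicAt_of_comp_eq_zero (hex k) (sub_comp_eq_zero_of_pdel_eq h hk)) i.zero_le hij

end EqualBoundaries

section HomotopyLifting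

variable {A : Type u} [Category.{v} A] [Abelian A] [MonoidalCategory A] {P : ℕ → A}
  {dP : ∀ i, P (i + 1) ⟶ P i}

theorem homotopicToUnit.sub_mem_coboundaries {k : ℕ} {u v : P k ⟶ 𝟙_ A}
    (h : homotopicToUnit P dP k u v) : u - v ∈ coboundaries dP (𝟙_ A) k := by
  unfold homotopicToUnit at h
  split_ifs at h with hk
  · rw [h, sub_self]
    exact zero_mem _
  · obtain ⟨s, hs⟩ := h
    rw [hs]
    exact zsmul_mem
      ((mem_coboundaries_iff_exists_eqToHom_comp (Nat.succ_pred hk).symm).2 ⟨s, rfl⟩) _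

namespace IsHomotopyLifting

variable {μ : P 0 ⟶ 𝟙_ A} {Δ : ∀ i, P i ⟶ tOb P P i} {n : ℕ} {hn : 1 ≤ n} {g : P n ⟶ 𝟙_ A}
  {ψ ψ' : DH P P ((n : ℤ) - 1)} {hPP : ∀ i, dP (i + 1) ≫ dP i = 0} [∀ i, Projective (P i)]

theorem sub_comp_augmentation_mem_coboundaries
    (hex : ∀ i, (ShortComplex.mk (dP (i + 1)) (dP i) (hPP i)).Exact) (hg : dP n ≫ g = 0)
    (hψ : IsHomotopyLifting P dP μ Δ n hn g ψ) (hψ' : IsHomotopyLifting P dP μ Δ n hn g ψ')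
    (h : ((n - 1 : ℕ) : ℤ) = (0 : ℕ) + ((n : ℤ) - 1)) :
    (ψ (n - 1) 0 h - ψ' (n - 1) 0 h) ≫ μ ∈ coboundaries dP (𝟙_ A) (n - 1) := by
  obtain ⟨-, η, hη, hμ⟩ := hψ
  obtain ⟨-, η', hη', hμ'⟩ := hψ'
  have hηg : (η (n - 1) n (by omega) - η' (n - 1) n (by omega)) ≫ g ∈
      coboundaries dP (𝟙_ A) (n - 1) :=
    (isNullHomotopicAt_sub_of_pdel_eq_of_neg hPP hex (hη.trans hη'.symm) (by omega)
      (by omega)).comp_cocycle_mem_coboundaries hg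
  have hsub := add_mem (sub_mem hμ.sub_mem_coboundaries hμ'.sub_mem_coboundaries)
    (zsmul_mem hηg ((-1) ^ (n + 1)))
  rwa [sub_sub_sub_comm, ← smul_sub, Preadditive.sub_comp, sub_add_cancel,
    ← Preadditive.sub_comp] at hsub

theorem sub_comp_mem_coboundaries [Epi μ] {hμ : dP 0 ≫ μ = 0}
    (hex₀ : (ShortComplex.mk (dP 0) μ hμ).Exact)
    (hex : ∀ i, (ShortComplex.mk (dP (i + 1)) (dP i) (hPP i)).Exact) (hg : dP n ≫ g = 0)
    (hψ : IsHomotopyLifting P dP μ Δ n hn g ψ) (hψ' : IsHomotopyLifting P dP μ Δ n hn g ψ')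
    {i m : ℕ} (him : (i : ℤ) = m + ((n : ℤ) - 1)) {Z : A} {f : P m ⟶ Z} (hf : dP m ≫ f = 0) :
    (ψ i m him - ψ' i m him) ≫ f ∈ coboundaries dP Z i := by
  have h₀ : ((n - 1 : ℕ) : ℤ) = (0 : ℕ) + ((n : ℤ) - 1) := by omega
  have hnull : IsNullHomotopicAt dP dP (ψ (n - 1) 0 h₀ - ψ' (n - 1) 0 h₀) :=
    isNullHomotopicAt_of_comp_mem_coboundaries hex₀
      (sub_comp_augmentation_mem_coboundaries hex hg hψ hψ' h₀)
  exact (isNullHomotopicAt_sub_of_pdel_eq hPP hex (hψ.1.trans hψ'.1.symm) h₀ hnull (by omega)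
    him).comp_cocycle_mem_coboundaries hf

end IsHomotopyLifting

end HomotopyLifting

theorem stmt10_general {A : Type u} [Category.{v} A] [Abelian A] [MonoidalCategory A] (P : ℕ → A)
    (dP : ∀ i, P (i + 1) ⟶ P i) (hPP : ∀ i, dP (i + 1) ≫ dP i = 0)
    (hproj : ∀ i, Projective (P i)) (μ : P 0 ⟶ 𝟙_ A) (hμd : dP 0 ≫ μ = 0) (hepi : Epi μ)
    (hex0 : imageSubobject (dP 0) = kernelSubobject μ)
    (hex : ∀ i, imageSubobject (dP (i + 1)) = kernelSubobject (dP i))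
    (Δf Δg : ∀ i, P i ⟶ tOb P P i) (m n : ℕ) (hm : 1 ≤ m) (hn : 1 ≤ n)
    (f : P m ⟶ 𝟙_ A) (hf : dP m ≫ f = 0) (g : P n ⟶ 𝟙_ A) (hg : dP n ≫ g = 0)
    (ψf ψ'f : DH P P ((m : ℤ) - 1)) (hψf : IsHomotopyLifting P dP μ Δf m hm f ψf)
    (hψ'f : IsHomotopyLifting P dP μ Δf m hm f ψ'f)
    (ψg ψ'g : DH P P ((n : ℤ) - 1)) (hψg : IsHomotopyLifting P dP μ Δg n hn g ψg)
    (hψ'g : IsHomotopyLifting P dP μ Δg n hn g ψ'g) {k : ℕ} (hk : k + 1 = m + n) :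
    (ψg k m (by omega) ≫ f - ((-1 : ℤ) ^ ((m - 1) * (n - 1))) • (ψf k n (by omega) ≫ g)) -
      (ψ'g k m (by omega) ≫ f - ((-1 : ℤ) ^ ((m - 1) * (n - 1))) • (ψ'f k n (by omega) ≫ g)) ∈
      coboundaries dP (𝟙_ A) k := by
  have hexact₀ : (ShortComplex.mk (dP 0) μ hμd).Exact :=
    (ShortComplex.exact_iff_image_eq_kernel _).2 hex0
  have hexact (i : ℕ) : (ShortComplex.mk (dP (i + 1)) (dP i) (hPP i)).Exact :=
    (ShortComplex.exact_iff_image_eq_kernel _).2 (hex i)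
  have hgf := hψg.sub_comp_mem_coboundaries hexact₀ hexact hg hψ'g (i := k) (by omega) hf
  have hfg := hψf.sub_comp_mem_coboundaries hexact₀ hexact hf hψ'f (i := k) (by omega) hg
  rw [sub_sub_sub_comm, ← smul_sub, ← Preadditive.sub_comp, ← Preadditive.sub_comp]
  exact sub_mem hgf (zsmul_mem hfg _)

theorem stmt10 (P : ℕ → C) (dP : ∀ i, P (i + 1) ⟶ P i)
    -- `(P, dP, μ)` is a projective resolution of `𝟙`
    (hPP : ∀ i, dP (i + 1) ≫ dP i = 0)
    (hproj : ∀ i, Projective (P i))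
    (μ : P 0 ⟶ 𝟙_ C) (hμd : dP 0 ≫ μ = 0) (hepi : Epi μ)
    (hex0 : imageSubobject (dP 0) = kernelSubobject μ)
    (hex : ∀ i, imageSubobject (dP (i + 1)) = kernelSubobject (dP i))
    -- `Δ : P ⟶ P ⊗ P` is a morphism of resolutions
    (Δ : ∀ i, P i ⟶ tOb P P i)
    (hΔd : ∀ i, Δ (i + 1) ≫ tD P dP i = dP i ≫ Δ i)
    (hΔμ : Δ 0 ≫ tAug P μ = μ)
    -- `f` is a degree `m` cocycle and `g` a degree `n` cocycle, `m, n ≥ 1`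
    (m n : ℕ) (hm : 1 ≤ m) (hn : 1 ≤ n)
    (f : P m ⟶ 𝟙_ C) (hf : dP m ≫ f = 0)
    (g : P n ⟶ 𝟙_ C) (hg : dP n ≫ g = 0)
    -- `ψf, ψ'f` are homotopy liftings of `(f, Δ)` and `ψg, ψ'g` of `(g, Δ)`
    (ψf ψ'f : DH P P ((m : ℤ) - 1))
    (hψf : IsHomotopyLifting P dP μ Δ m hm f ψf)
    (hψ'f : IsHomotopyLifting P dP μ Δ m hm f ψ'f)
    (ψg ψ'g : DH P P ((n : ℤ) - 1))
    (hψg : IsHomotopyLifting P dP μ Δ n hn g ψg)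
    (hψ'g : IsHomotopyLifting P dP μ Δ n hn g ψ'g) :
    -- then the two cochain-level brackets differ by a coboundary `v ∘ d_{m+n-2}`
    ∃ v : P (m + n - 2) ⟶ 𝟙_ C,
      (ψg (m + n - 1) m (by omega) ≫ f -
        ((-1 : ℤ) ^ ((m - 1) * (n - 1))) • (ψf (m + n - 1) n (by omega) ≫ g)) -
      (ψ'g (m + n - 1) m (by omega) ≫ f -
        ((-1 : ℤ) ^ ((m - 1) * (n - 1))) • (ψ'f (m + n - 1) n (by omega) ≫ g)) =
      eqToHom (congrArg P (show m + n - 1 = (m + n - 2) + 1 by omega)) ≫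
        dP (m + n - 2) ≫ v := by
  exact (mem_coboundaries_iff_exists_eqToHom_comp (by omega)).1 <|
    stmt10_general P dP hPP hproj μ hμd hepi hex0 hex Δ Δ m n hm hn f hf g hg ψf ψ'f hψf hψ'f
      ψg ψ'g hψg hψ'g (by omega)
end
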